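/- For all integers n ≥ 1, r ≥ 1 and 0 ≤ d ≤ n, the number of r-parking functions is |P_{n,d}^r| = (n!/d!)·C(d(r−1)+n+1, n−d)·(d(r−1)+n+1)^{d−1}, i.e. d!·(d(r−1)+n+1)·|P_{n,d}^r| = n!·C(d(r−1)+n+1, n−d)·(d(r−1)+n+1)^{d}. -/

import Mathlib

/-- Steps of an `r`-Schröder path: down `(0,-1)`, right `(1,0)`, diagonal `(r,-1)`. -/
inductive SStep : Type
  | down | right | diag
deriving DecidableEq

/-- Displacement of a step for slope parameter `r`. -/
def sDisp (r : ℤ) : SStep → ℤ × ℤ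
  | .down => (0, -1)
  | .right => (1, 0)
  | .diag => (r, -1)

/-- Position reached after performing the steps `l`, starting at `(0, n)`. -/
def sPos (r n : ℤ) (l : List SStep) : ℤ × ℤ :=
  l.foldl (fun p s => p + sDisp r s) (0, n)

/-- `α` is an `r`-Schröder path of size `n`: it goes from `(0,n)` to `(r*n, 0)` and never
passes strictly above the line segment joining `(0,n)` and `(r*n,0)`
(the segment lies on the line `x + r*y = r*n`). -/
def IsSchroder (r n : ℕ) (α : List SStep) : Prop :=
  sPos r n α = ((r : ℤ) * n, 0) ∧
  ∀ β, β <+: α → (sPos r n β).1 + (r : ℤ) * (sPos r n β).2 ≤ (r : ℤ) * n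

/-- `Sch r n d` : the set of `r`-Schröder paths of size `n` with exactly `n - d`
diagonal steps. -/
def Sch (r n d : ℕ) : Set (List SStep) :=
  {α | IsSchroder r n α ∧ α.count SStep.diag = n - d}


/-- The left-area code of a path: scanning the steps with current `x`-coordinate,
each down step in a row contributes the entry `(x, false)` and each diagonal step
contributes `(x, true)` (a "barred" value); right steps contribute nothing.
For an `r`-Schröder path of size `n` this produces the list `(a_1,…,a_n)` of left
areas of the rows, with the bar marker on rows traversed by a diagonal step. -/
def sCode (r : ℤ) : ℤ → List SStep → List (ℤ × Bool)
  | _, [] => []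
  | x, .down :: t => (x, false) :: sCode r x t
  | x, .right :: t => sCode r (x + 1) t
  | x, .diag :: t => (x, true) :: sCode r (x + r) t

/-- `Pk r n d` : the set of `r`-parking functions, i.e. sequences obtained by permuting
the entries (with their bar markers) of the left-area code of some path in `Sch r n d`. -/
def Pk (r n d : ℕ) : Set (List (ℤ × Bool)) :=
  {l | ∃ α ∈ Sch r n d, l.Perm (sCode r 0 α)}


def wt (r : ℤ) : Bool → ℤ
  | false => r
  | true => 1

def SS (r : ℤ) (l : List (ℤ × Bool)) (x : ℤ) : ℤ :=
  (l.map (fun p => if p.1 < x then wt r p.2 else 0)).sum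

def cb (l : List (ℤ × Bool)) (x : ℤ) : ℕ := l.countP (fun q => q.2 && decide (q.1 < x))

def shf (c : ℤ) (l : List (ℤ × Bool)) : List (ℤ × Bool) :=
  l.map (fun p => (p.1 + c * (cb l p.1 : ℤ), p.2))

lemma cb_mono (l : List (ℤ × Bool)) {x y : ℤ} (h : x ≤ y) : cb l x ≤ cb l y := by
  unfold cb
  apply List.countP_mono_left
  intro q _ hq
  simp only [Bool.and_eq_true, decide_eq_true_eq] at hq ⊢
  exact ⟨hq.1, by omega⟩

lemma cb_shf {c : ℤ} (hc : 0 ≤ c) (l : List (ℤ × Bool)) (x : ℤ) :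
    cb (shf c l) (x + c * (cb l x : ℤ)) = cb l x := by
  conv_lhs => unfold cb shf
  rw [List.countP_map]
  conv_rhs => unfold cb
  apply List.countP_congr
  intro q _
  simp only [Function.comp, Bool.and_eq_true, decide_eq_true_eq]
  have : q.1 + c * (cb l q.1 : ℤ) < x + c * (cb l x : ℤ) ↔ q.1 < x := by
    constructor
    · intro h
      by_contra h2
      have h3 := cb_mono l (not_lt.mp h2)
      have : c * (cb l x : ℤ) ≤ c * (cb l q.1 : ℤ) := by gcongr
      omega
    · intro h
      have h3 := cb_mono l h.le
      have : c * (cb l q.1 : ℤ) ≤ c * (cb l x : ℤ) := by gcongr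
      omega
  exact and_congr_right fun _ => this

lemma shf_inv {c : ℤ} (hc : 0 ≤ c) (l : List (ℤ × Bool)) : shf (-c) (shf c l) = l := by
  conv_lhs => unfold shf
  change List.map (fun p : ℤ × Bool => (p.1 + -c * (cb (shf c l) p.1 : ℤ), p.2)) (shf c l) = l
  conv_lhs => arg 2; unfold shf
  rw [List.map_map]
  conv_rhs => rw [← List.map_id l]
  apply List.map_congr_left
  intro p _
  simp only [Function.comp, cb_shf hc, id]
  ext
  · simp
  · rfl

lemma shf_injective {c : ℤ} (hc : 0 ≤ c) : Function.Injective (shf c) :=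
  Function.LeftInverse.injective (shf_inv hc)

lemma code_ge {r : ℤ} (hr : 0 ≤ r) (α : List SStep) : ∀ x : ℤ, ∀ p ∈ sCode r x α, x ≤ p.1 := by
  induction α with
  | nil => intro x p hp; simp [sCode] at hp
  | cons s t ih =>
    intro x p hp
    cases s <;> simp only [sCode, List.mem_cons] at hp
    · rcases hp with rfl | hp
      · exact le_rfl
      · exact ih _ _ hp
    · have := ih _ _ hp; omega
    · rcases hp with rfl | hp
      · exact le_rfl
      · have := ih _ _ hp; omega

lemma cb_zero (l : List (ℤ × Bool)) (x : ℤ) (h : ∀ p ∈ l, x ≤ p.1) : cb l x = 0 := by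
  unfold cb
  rw [List.countP_eq_zero]
  intro p hp
  have := h p hp
  simp only [Bool.and_eq_true, decide_eq_true_eq]
  omega

lemma code_shift (c : ℤ) (α : List SStep) : ∀ x m : ℤ,
    sCode (1 + c) (x + c * m) α =
      (sCode 1 x α).map (fun p => (p.1 + c * (m + (cb (sCode 1 x α) p.1 : ℤ)), p.2)) := by
  induction α with
  | nil => intro x m; simp [sCode]
  | cons s t ih =>
    intro x m
    have hge := code_ge (r := 1) (by norm_num) (s :: t) x
    cases s
    · have h0 := cb_zero _ _ hge
      simp only [sCode] at h0 ⊢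
      rw [List.map_cons, h0, ih]
      congr 1
      simp
    · simp only [sCode]
      rw [← ih]; congr 1; ring
    · have h0 := cb_zero _ _ hge
      simp only [sCode] at h0 ⊢
      rw [List.map_cons, h0]
      congr 1
      · simp
      · have : x + c * m + (1 + c) = (x+1) + c * (m+1) := by ring
        rw [this, ih]
        apply List.map_congr_left
        intro p hp
        have hp' := code_ge (r := 1) (by norm_num) t _ p hp
        have : x < p.1 := by omega
        ext
        · simp [cb, this]; left; ring
        · rfl

lemma shf_code (c : ℤ) (α : List SStep) : shf c (sCode 1 0 α) = sCode (1 + c) 0 α := by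
  have := code_shift c α 0 0
  simp only [mul_zero, add_zero, zero_add] at this
  rw [this]; rfl

def QP (r n d : ℕ) : Set (List (ℤ × Bool)) :=
  {l | ∃ α ∈ Sch r n d, l.Perm (sCode 1 0 α)}

lemma cb_perm {l l' : List (ℤ × Bool)} (h : l.Perm l') (x : ℤ) : cb l x = cb l' x :=
  h.countP_eq _

lemma exists_perm_map {α β : Type*} (f : α → β) {l : List β} {m : List α}
    (h : l.Perm (m.map f)) : ∃ l' : List α, l'.Perm m ∧ l = l'.map f := by
  generalize hk : m.map f = k at h
  induction h generalizing m with
  | nil => exact ⟨m, List.Perm.refl _, hk.symm⟩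
  | cons x h ih => 
    obtain ⟨a, t, rfl, rfl, rfl⟩ := List.map_eq_cons_iff.mp hk
    obtain ⟨l', h1, h2⟩ := ih rfl
    exact ⟨a :: l', h1.cons _, by simp [h2]⟩
  | swap x y t => 
    obtain ⟨a, t, rfl, rfl, h⟩ := List.map_eq_cons_iff.mp hk
    obtain ⟨b, t, rfl, rfl, rfl⟩ := List.map_eq_cons_iff.mp h
    exact ⟨b :: a :: t, List.Perm.swap _ _ _, by simp⟩
  | trans h1 h2 ih1 ih2 =>
    obtain ⟨l', h3, h4⟩ := ih2 hk
    obtain ⟨l'', h5, h6⟩ := ih1 h4.symm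
    exact ⟨l'', h5.trans h3, h6⟩

lemma Pk_eq_image (r n d : ℕ) (hr : 1 ≤ r) : Pk r n d = shf ((r : ℤ) - 1) '' QP r n d := by
  have hrr : (1 : ℤ) + ((r:ℤ) - 1) = r := by ring
  ext l
  constructor
  · rintro ⟨α, hα, hl⟩
    have h := shf_code ((r:ℤ) - 1) α
    rw [hrr] at h
    rw [← h] at hl
    obtain ⟨l', h1, h2⟩ := exists_perm_map _ hl
    refine ⟨l', ⟨α, hα, h1⟩, ?_⟩
    rw [h2]
    unfold shf
    apply List.map_congr_left
    intro p _
    rw [cb_perm h1]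
  · rintro ⟨l', ⟨α, hα, h1⟩, rfl⟩
    refine ⟨α, hα, ?_⟩
    have h := shf_code ((r:ℤ) - 1) α
    rw [hrr] at h
    rw [← h]
    have : shf ((r:ℤ)-1) l' = l'.map (fun p => (p.1 + ((r:ℤ)-1) * (cb (sCode 1 0 α) p.1 : ℤ), p.2)) := by
      unfold shf
      apply List.map_congr_left
      intro p _
      rw [cb_perm h1]
    rw [this]
    exact h1.map _

lemma Pk_ncard (r n d : ℕ) (hr : 1 ≤ r) : (Pk r n d).ncard = (QP r n d).ncard := by
  rw [Pk_eq_image r n d hr]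
  exact Set.ncard_image_of_injective _ (shf_injective (by omega))

def hgt (r : ℤ) : SStep → ℤ
  | .down => r
  | .right => -1
  | .diag => 0

/-- all prefixes have nonnegative height -/
def Good (r : ℤ) : ℤ → List SStep → Prop
  | h, [] => 0 ≤ h
  | h, s :: t => 0 ≤ h ∧ Good r (h + hgt r s) t

lemma good_iff (r : ℤ) (α : List SStep) : ∀ h, Good r h α ↔
    ∀ β, β <+: α → 0 ≤ h + (β.map (hgt r)).sum := by
  induction α with
  | nil => intro h; simp [Good]
  | cons s t ih =>
    intro h
    simp only [Good, ih]
    constructor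
    · rintro ⟨h1, h2⟩ β hβ
      rcases List.prefix_cons_iff.mp hβ with rfl | ⟨γ, rfl, hγ⟩
      · simpa using h1
      · have := h2 γ hγ
        simp; omega
    · intro H
      refine ⟨by simpa using H [] (by simp), fun γ hγ => ?_⟩
      have := H (s :: γ) (by simpa using hγ)
      simp at this; omega

lemma sPos_aux (r : ℤ) (α : List SStep) : ∀ p : ℤ × ℤ,
    (α.foldl (fun p s => p + sDisp r s) p).1 + r * (α.foldl (fun p s => p + sDisp r s) p).2
      = p.1 + r * p.2 - (α.map (hgt r)).sum ∧
    (α.foldl (fun p s => p + sDisp r s) p).2 = p.2 - α.count .down - α.count .diag := by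
  induction α with
  | nil => intro p; simp
  | cons s t ih =>
    intro p
    obtain ⟨e1, e2⟩ := ih (p + sDisp r s)
    rw [List.foldl_cons]
    constructor
    · rw [e1]
      cases s <;> simp [sDisp, hgt] <;> ring
    · rw [e2]
      cases s <;> simp [sDisp] <;> ring

lemma schroder_iff (r n : ℕ) (α : List SStep) : IsSchroder r n α ↔
    ((α.map (hgt r)).sum = 0 ∧ α.count .down + α.count .diag = n) ∧ Good r 0 α := by
  unfold IsSchroder
  rw [good_iff]
  refine and_congr ?_ ?_
  · obtain ⟨h1, h2⟩ := sPos_aux r α (0, (n:ℤ))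
    change (sPos r n α).1 + r * (sPos r n α).2 = _ at h1
    change (sPos r n α).2 = _ at h2
    rw [Prod.ext_iff]
    simp only at h1 h2 ⊢
    constructor
    · rintro ⟨h3, h4⟩
      rw [h3, h4] at h1
      rw [h4] at h2
      constructor
      · linarith
      · omega
    · rintro ⟨h3, h4⟩
      have h5 : (sPos r n α).2 = 0 := by omega
      rw [h5, h3] at h1
      refine ⟨by linarith, h5⟩
  · refine forall_congr' fun β => forall_congr' fun _ => ?_
    obtain ⟨h1, h2⟩ := sPos_aux r β (0, (n:ℤ))
    change (sPos r n β).1 + r * (sPos r n β).2 = _ at h1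
    rw [h1]
    simp

def cols (α : List SStep) : ℕ := α.count .right + α.count .diag

lemma hgt_sum (r : ℤ) (α : List SStep) :
    (α.map (hgt r)).sum = r * α.count .down - α.count .right := by
  induction α with
  | nil => simp
  | cons s t ih => cases s <;> simp [hgt, ih] <;> ring

lemma code_length (r : ℤ) (α : List SStep) : ∀ x,
    (sCode r x α).length = α.count .down + α.count .diag := by
  induction α with
  | nil => intro x; simp [sCode]
  | cons s t ih => intro x; cases s <;> simp [sCode, ih] <;> ring

lemma code_countP (r : ℤ) (α : List SStep) : ∀ x,
    (sCode r x α).countP (fun p => p.2) = α.count .diag := by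
  induction α with
  | nil => intro x; simp [sCode]
  | cons s t ih => intro x; cases s <;> simp [sCode, ih]

lemma code_count_true (α : List SStep) : ∀ x y,
    (sCode 1 x α).count (y, true) ≤ 1 := by
  induction α with
  | nil => intro x; simp [sCode]
  | cons s t ih => 
    intro x y
    cases s
    · simp [sCode, ih]
    · simp [sCode, ih]
    · simp only [sCode, List.count_cons]
      by_cases h : x = y
      · subst h
        have : (sCode 1 (x+1) t).count (x, true) = 0 := by
          rw [List.count_eq_zero]
          intro hm
          have := code_ge (r := 1) (by norm_num) t _ _ hm
          simp at this
        rw [this]; simp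
      · simp [h, ih]

lemma SS_nonneg {r : ℤ} (hr : 0 ≤ r) (l x) : 0 ≤ SS r l x := by
  unfold SS
  apply List.sum_nonneg
  intro a ha
  simp only [List.mem_map] at ha
  obtain ⟨p, _, rfl⟩ := ha
  split_ifs
  · cases p.2 <;> simp [wt, hr]
  · rfl

lemma good_SS {r : ℤ} (hr : 0 ≤ r) (α : List SStep) : ∀ h c x : ℤ, Good r h α → c ≤ x →
    x ≤ c + cols α → x - c ≤ SS r (sCode 1 c α) x + h := by
  induction α with
  | nil => 
    intro h c x hg h1 h2
    simp [Good, cols, sCode, SS] at *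
    omega
  | cons s t ih =>
    intro h c x hg h1 h2
    obtain ⟨h3, hg⟩ := hg
    rcases h1.eq_or_lt with rfl | h1
    · have := SS_nonneg hr (sCode 1 c (s :: t)) c
      omega
    cases s
    · have := ih _ c x hg h1.le (by simpa [cols] using h2)
      simp [SS, sCode, h1, wt, hgt] at this ⊢
      omega
    · have := ih _ (c+1) x hg h1 (by simp [cols] at h2 ⊢; omega)
      simp [SS, sCode, hgt] at this ⊢
      omega
    · have := ih _ (c+1) x hg h1 (by simp [cols] at h2 ⊢; omega)
      simp [SS, sCode, h1, wt, hgt] at this ⊢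
      omega

def build (l : List (ℤ × Bool)) : ℤ → ℕ → List SStep
  | _, 0 => []
  | c, m+1 => List.replicate (l.count (c, false)) .down ++
      (if (c, true) ∈ l then .diag else .right) :: build l (c+1) m

lemma build_cols (l) : ∀ m c, cols (build l c m) = m := by
  intro m
  induction m with
  | zero => intro c; simp [build, cols]
  | succ m ih =>
    intro c
    have := ih (c+1)
    unfold cols at this ⊢
    simp only [build]
    split_ifs <;> simp [List.count_replicate] <;> omega

lemma good_replicate {r : ℤ} (hr : 0 ≤ r) (t) (k : ℕ) : ∀ h, 0 ≤ h → Good r (h + k * r) t →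
    Good r h (List.replicate k .down ++ t) := by
  induction k with
  | zero => intro h _ hg; simpa using hg
  | succ k ih =>
    intro h h0 hg
    simp only [List.replicate_succ, List.cons_append, Good]
    refine ⟨h0, ih _ (by simp [hgt]; omega) ?_⟩
    convert hg using 1
    simp [hgt]; ring

lemma SS_succ (r : ℤ) (l : List (ℤ × Bool)) (c : ℤ) :
    SS r l (c+1) = SS r l c + r * l.count (c, false) + l.count (c, true) := by
  induction l with
  | nil => simp [SS]
  | cons p t ih =>
    obtain ⟨y, b⟩ := p
    simp only [SS, List.map_cons, List.sum_cons, List.count_cons] at ih ⊢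
    rw [ih]
    rcases lt_trichotomy y c with h | h | h
    · have h1 : y < c + 1 := by omega
      simp [h, h1, h.ne]; ring
    · subst h
      cases b <;> simp [wt] <;> ring
    · have h1 : ¬ y < c + 1 := by omega
      have h2 : ¬ y < c := by omega
      simp [h1, h2, h.ne']

lemma good_build {r : ℤ} (hr : 0 ≤ r) (l : List (ℤ × Bool)) (hl : ∀ y, l.count (y, true) ≤ 1) :
    ∀ (m : ℕ) (c : ℤ), (∀ x, c ≤ x → x ≤ c + m → x ≤ SS r l x) →
    Good r (SS r l c - c) (build l c m) := by
  intro m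
  induction m with
  | zero => intro c h; have := h c le_rfl (by simp); simp [build, Good]; omega
  | succ m ih =>
    intro c h
    have h0 := h c le_rfl (by omega)
    have h1 := ih (c+1) (fun x hx hx' => h x (by omega) (by push_cast; omega))
    rw [SS_succ] at h1
    rw [build]
    apply good_replicate hr _ _ _ (by omega)
    refine ⟨?_, ?_⟩
    · positivity
    · have h2 := hl c
      split_ifs with hm
      · have : l.count (c, true) = 1 := le_antisymm h2 (List.count_pos_iff.mpr hm)
        rw [this] at h1
        convert h1 using 1
        simp [hgt]; ring
      · have : l.count (c, true) = 0 := List.count_eq_zero.mpr hm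
        rw [this] at h1
        convert h1 using 1
        simp [hgt]; ring

lemma code_replicate (c : ℤ) (t) (k : ℕ) : sCode 1 c (List.replicate k .down ++ t) =
    List.replicate k (c, false) ++ sCode 1 c t := by
  induction k with
  | zero => simp
  | succ k ih => simp [List.replicate_succ, sCode, ih]

lemma code_build_count (l : List (ℤ × Bool)) (hl : ∀ y, l.count (y, true) ≤ 1) (y : ℤ) (b : Bool) :
    ∀ (m : ℕ) (c : ℤ), (sCode 1 c (build l c m)).count (y, b) =
      if c ≤ y ∧ y < c + m then l.count (y, b) else 0 := by
  intro m
  induction m with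
  | zero => intro c; rw [if_neg (by push_cast; omega)]; simp [build, sCode]
  | succ m ih =>
    intro c
    have key : (sCode 1 c (build l c (m+1))).count (y, b) =
        (if y = c then l.count (y, b) else 0) + (sCode 1 (c+1) (build l (c+1) m)).count (y,b) := by
      rw [build, code_replicate, List.count_append, List.count_replicate]
      have h2 := hl c
      by_cases hm : (c, true) ∈ l
      · have h1 : l.count (c, true) = 1 := le_antisymm h2 (List.count_pos_iff.mpr hm)
        rw [if_pos hm, sCode, List.count_cons]
        by_cases h : y = c
        · subst h
          cases b <;> simp [h1]; omega
        · have h' : ¬ c = y := fun e => h e.symm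
          simp [h, h']
      · have h1 : l.count (c, true) = 0 := List.count_eq_zero.mpr hm
        rw [if_neg hm, sCode]
        by_cases h : y = c
        · subst h
          cases b <;> simp [h1]
        · have h' : ¬ c = y := fun e => h e.symm
          simp [h, h']
    rw [key, ih]
    by_cases h : y = c
    · subst h
      rw [if_pos rfl, if_neg (by omega), if_pos (by push_cast; omega)]; simp
    · rw [if_neg h, zero_add]
      apply if_congr _ rfl rfl
      push_cast; omega

def QQ (r n d : ℕ) : Set (List (ℤ × Bool)) :=
  {l | l.length = n ∧ l.countP (fun p => p.2) = n - d ∧ (∀ y, l.count (y, true) ≤ 1) ∧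
    (∀ p ∈ l, 0 ≤ p.1) ∧ ∀ x : ℤ, 0 ≤ x → x ≤ r * d + (n - d : ℕ) → x ≤ SS r l x}

lemma SS_perm (r : ℤ) {l l' : List (ℤ × Bool)} (h : l.Perm l') (x : ℤ) : SS r l x = SS r l' x :=
  (h.map _).sum_eq

lemma wt_total (r : ℤ) (l : List (ℤ × Bool)) : (l.map (fun p => wt r p.2)).sum =
    r * (l.length - l.countP (fun p => p.2)) + l.countP (fun p => p.2) := by
  induction l with
  | nil => simp
  | cons p t ih =>
    obtain ⟨y, b⟩ := p
    rw [List.map_cons, List.sum_cons, ih]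
    cases b <;> simp [wt] <;> ring

lemma QQ_lt {r n d : ℕ} (hr : 1 ≤ r) (hd : d ≤ n) {l} (hl : l ∈ QQ r n d) :
    ∀ p ∈ l, p.1 < r * d + (n - d : ℕ) := by
  obtain ⟨h1, h2, h3, h4, h5⟩ := hl
  have h6 := h5 (r * d + (n-d:ℕ)) (by positivity) le_rfl
  have h7 := wt_total r l
  rw [h1, h2] at h7
  have h8 : (n:ℤ) - (n-d:ℕ) = d := by omega
  rw [h8] at h7
  by_contra! hcon
  obtain ⟨p, hp, hpx⟩ := hcon
  have : SS r l (r * d + (n-d:ℕ)) < (l.map (fun p => wt r p.2)).sum := by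
    unfold SS
    apply List.sum_lt_sum
    · intro q _
      split_ifs
      · rfl
      · cases q.2 <;> simp [wt]
    · refine ⟨p, hp, ?_⟩
      rw [if_neg (by omega)]
      cases p.2 <;> simp [wt]; omega
  omega

lemma QP_eq_QQ (r n d : ℕ) (hr : 1 ≤ r) (hd : d ≤ n) : QP r n d = QQ r n d := by
  ext l
  constructor
  · rintro ⟨α, ⟨hα, hk⟩, hl⟩
    rw [schroder_iff, hgt_sum] at hα
    obtain ⟨⟨h1, h2⟩, h3⟩ := hα
    refine ⟨?_, ?_, ?_, ?_, ?_⟩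
    · rw [hl.length_eq, code_length, h2]
    · rw [hl.countP_eq, code_countP, hk]
    · intro y; rw [hl.count_eq]; exact code_count_true _ _ _
    · intro p hp; exact code_ge (by norm_num) α 0 p (hl.mem_iff.mp hp)
    · intro x hx0 hx
      rw [SS_perm _ hl]
      have hdn : α.count .down = d := by omega
      rw [hdn] at h1
      have := good_SS (by positivity) α 0 0 x h3 hx0 (by unfold cols; push_cast; omega)
      omega
  · intro hl
    have hlt := QQ_lt hr hd hl
    obtain ⟨h1, h2, h3, h4, h5⟩ := hl
    have hp : l.Perm (sCode 1 0 (build l 0 (r * d + (n-d)))) := by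
      rw [List.perm_iff_count]
      rintro ⟨y, b⟩
      rw [code_build_count l h3]
      split_ifs with h
      · rfl
      · rw [List.count_eq_zero]
        intro hm
        apply h
        exact ⟨h4 _ hm, by have := hlt _ hm; push_cast at this ⊢; simpa using this⟩
    refine ⟨_, ⟨?_, ?_⟩, hp⟩
    · rw [schroder_iff, hgt_sum]
      have e1 := code_length 1 (build l 0 (r * d + (n-d))) 0
      have e2 := code_countP 1 (build l 0 (r * d + (n-d))) 0
      rw [← hp.length_eq, h1] at e1
      rw [← hp.countP_eq, h2] at e2
      have e3 := build_cols l (r * d + (n-d)) 0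
      unfold cols at e3
      refine ⟨⟨?_, e1.symm⟩, ?_⟩
      · have : (build l 0 (r * d + (n-d))).count .down = d := by omega
        rw [this]
        have : (build l 0 (r * d + (n-d))).count .right = r * d := by omega
        rw [this]; push_cast; ring
      · have := good_build (r := r) (by positivity) l h3 (r * d + (n-d)) 0 (by
          intro x hx hx'; exact h5 x hx (by push_cast at hx' ⊢; omega))
        convert this using 1
        have : SS r l 0 = 0 := by
          unfold SS
          apply List.sum_eq_zero
          intro a ha
          simp only [List.mem_map] at ha
          obtain ⟨p, hp, rfl⟩ := ha
          rw [if_neg]; have := h4 p hp; omega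
        rw [this]; simp
    · rw [← code_countP 1 _ 0, ← hp.countP_eq, h2]

lemma cycle_lemma (m : ℕ) (W : ZMod (m+1) → ℕ) (hW : ∑ z, W z = m) :
    ∃! s : ZMod (m+1), ∀ x ≤ m, x ≤ ∑ y ∈ Finset.range x, W (s + (y : ZMod (m+1))) := by
  set F : ℕ → ℤ := fun x => ((∑ j ∈ Finset.range x, W (j : ZMod (m+1)) : ℕ) : ℤ) - x with hF
  have htot : ∑ j ∈ Finset.range (m+1), W (j : ZMod (m+1)) = m := by
    refine Eq.trans ?_ hW
    rw [← Fin.sum_univ_eq_sum_range (fun j => W (j : ZMod (m+1))) (m+1)]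
    apply Finset.sum_congr rfl
    intro i _
    congr 1
    exact Fin.cast_val_eq_self i
  have hadd : ∀ s x : ℕ, F (s + x) =
      F s + ((∑ y ∈ Finset.range x, W ((s : ZMod (m+1)) + (y : ZMod (m+1))) : ℕ) : ℤ) - x := by
    intro s x
    simp only [hF, Finset.sum_range_add]
    push_cast
    ring
  have hper : ∀ x, F (x + (m+1)) = F x - 1 := by
    intro x
    have h0 : F (m+1) = -1 := by
      simp only [hF, htot]; push_cast; ring
    have h1 := hadd (m+1) x
    have h2 : ((m+1 : ℕ) : ZMod (m+1)) = 0 := ZMod.natCast_self _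
    rw [h2, h0] at h1
    simp only [zero_add] at h1
    rw [add_comm x, h1]
    simp only [hF]; ring
  have key : ∀ s : ZMod (m+1), (∀ x ≤ m, x ≤ ∑ y ∈ Finset.range x, W (s + (y : ZMod (m+1)))) ↔
      ∀ x ≤ m, F s.val ≤ F (s.val + x) := by
    intro s
    refine forall_congr' fun x => forall_congr' fun _ => ?_
    rw [hadd, ZMod.natCast_zmod_val]
    omega
  simp only [key]
  obtain ⟨s, hs, hmin⟩ := Finset.exists_min_image (Finset.range (m+1))
    (fun s => ((m:ℤ)+1) * F s + s) ⟨0, by simp⟩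
  rw [Finset.mem_range] at hs
  have hgood : ∀ (s : ZMod (m+1)), (∀ x ≤ m, F s.val ≤ F (s.val + x)) →
      ∀ j < m + 1, (s.val ≤ j → F s.val ≤ F j) ∧ (j < s.val → F s.val < F j) := by
    intro s h j hj
    constructor
    · intro h1
      have := h (j - s.val) (by omega)
      rwa [show s.val + (j - s.val) = j by omega] at this
    · intro h1
      have := ZMod.val_lt s
      have h2 := h (j + (m+1) - s.val) (by omega)
      rw [show s.val + (j + (m+1) - s.val) = j + (m+1) by omega, hper] at h2
      omega
  refine ⟨(s : ZMod (m+1)), ?_, ?_⟩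
  · intro x hx
    rw [ZMod.val_natCast_of_lt hs]
    by_cases h : s + x < m + 1
    · have := hmin (s+x) (by simpa using h)
      push_cast at this
      by_contra hc
      nlinarith
    · have h1 := hmin (s + x - (m+1)) (by simp; omega)
      have h2 := hper (s + x - (m+1))
      rw [show s + x - (m+1) + (m+1) = s + x by omega] at h2
      have h3 : ((s + x - (m+1) : ℕ) : ℤ) < s := by omega
      rw [h2]
      by_contra hc
      nlinarith
  · intro s' hs'
    have hs1 : ∀ j < m + 1, (s ≤ j → F s ≤ F j) ∧ (j < s → F s < F j) := by
      intro j hj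
      have h1 := hmin j (by simpa using hj)
      constructor
      · intro h
        by_contra hc
        have : (j:ℤ) ≤ m := by omega
        nlinarith
      · intro h
        by_contra hc
        have : (j:ℤ) < s := by omega
        nlinarith
    have h1 := hgood s' hs' s hs
    have h2 := hs1 s'.val (ZMod.val_lt s')
    have : s'.val = s := by
      rcases lt_trichotomy s'.val s with h | h | h
      · have := h1.1 h.le; have := h2.2 h; omega
      · exact h
      · have := h1.2 h; have := h2.1 h.le; omega
    rw [← this, ZMod.natCast_zmod_val]

open Classical in
noncomputable def TT (n m k : ℕ) : Finset (Finset (Fin n) × (Fin n → ZMod (m+1))) :=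
  Finset.univ.filter fun p => p.1.card = k ∧ Set.InjOn p.2 p.1

def wB {n : ℕ} (r : ℕ) (B : Finset (Fin n)) (i : Fin n) : ℕ := if i ∈ B then 1 else r

def PC {n m : ℕ} (r : ℕ) (p : Finset (Fin n) × (Fin n → ZMod (m+1))) : Prop :=
  ∀ x ≤ m, x ≤ ∑ i, if (p.2 i).val < x then wB r p.1 i else 0

open Classical in
noncomputable def QF (r n m k : ℕ) : Finset (Finset (Fin n) × (Fin n → ZMod (m+1))) :=
  (TT n m k).filter (PC r)

lemma sum_link {n m : ℕ} (g : Fin n → ZMod (m+1)) (w : Fin n → ℕ) (s : ZMod (m+1)) (x : ℕ)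
    (hx : x ≤ m) : (∑ i, if (g i - s).val < x then w i else 0) =
    ∑ y ∈ Finset.range x, ∑ i, if g i = s + (y : ZMod (m+1)) then w i else 0 := by
  rw [Finset.sum_comm]
  apply Finset.sum_congr rfl
  intro i _
  have : ∀ y ∈ Finset.range x, (if g i = s + (y : ZMod (m+1)) then w i else 0) =
      if (g i - s).val = y then w i else 0 := by
    intro y hy
    rw [Finset.mem_range] at hy
    apply if_congr _ rfl rfl
    constructor
    · intro h
      rw [h, add_sub_cancel_left, ZMod.val_natCast_of_lt (by omega)]
    · intro h
      rw [← h, ZMod.natCast_zmod_val]; ring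
  rw [Finset.sum_congr rfl this, Finset.sum_ite_eq]
  simp

lemma exists_unique_shift (r n d : ℕ) (hd : d ≤ n)
    (B : Finset (Fin n)) (hB : B.card = n - d) (g : Fin n → ZMod ((r*d+(n-d))+1)) :
    ∃! s, PC r (B, fun i => g i - s) := by
  have := cycle_lemma (r*d+(n-d)) (fun z => ∑ i, if g i = z then wB r B i else 0) (by
    rw [Finset.sum_comm]
    simp only [Finset.sum_ite_eq, Finset.mem_univ, if_true]
    unfold wB
    rw [Finset.sum_ite]
    simp only [Finset.sum_const, smul_eq_mul, mul_one]
    have h1 : (Finset.univ.filter (fun i => i ∈ B)).card = n - d := by simp [hB]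
    have h2 : (Finset.univ.filter (fun i => i ∉ B)).card = d := by
      have := Finset.card_filter_add_card_filter_not (s := (Finset.univ : Finset (Fin n))) (fun i => i ∈ B)
      simp only [Finset.card_univ, Fintype.card_fin] at this
      omega
    rw [h1, h2]; ring)
  convert this using 1
  funext s
  unfold PC
  refine propext (forall_congr' fun x => forall_congr' fun hx => ?_)
  simp only
  rw [sum_link g _ s x hx]

lemma card_QF (r n d : ℕ) (hd : d ≤ n) :
    (r*d+(n-d)+1) * (QF r n (r*d+(n-d)) (n-d)).card = (TT n (r*d+(n-d)) (n-d)).card := by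
  set m := r*d+(n-d) with hm
  have h1 : (m+1) * (QF r n m (n-d)).card =
      ((Finset.univ : Finset (ZMod (m+1))) ×ˢ QF r n m (n-d)).card := by
    rw [Finset.card_product, Finset.card_univ, ZMod.card]
  rw [h1]
  apply Finset.card_bij (fun p _ => (p.2.1, fun i => p.2.2 i + p.1))
  · rintro ⟨s, B, g⟩ hp
    simp only [Finset.mem_product, QF, TT, Finset.mem_filter, Finset.mem_univ, true_and] at hp ⊢
    refine ⟨hp.1.1, fun i hi j hj hij => hp.1.2 hi hj ?_⟩
    simpa using hij
  · rintro ⟨s, B, g⟩ hp ⟨s', B', g'⟩ hp' he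
    simp only [Finset.mem_product, QF, TT, Finset.mem_filter, Finset.mem_univ, true_and] at hp hp'
    simp only [Prod.mk.injEq] at he
    obtain ⟨rfl, he⟩ := he
    obtain ⟨t, _, ht⟩ := exists_unique_shift r n d hd B hp.1.1 (fun i => g i + s)
    have e1 := ht s (by simpa using hp.2)
    have e2 := ht s' (by
      have h3 : ∀ i, g i + s = g' i + s' := fun i => congrFun he i
      simp only [h3]; simpa using hp'.2)
    have e3 : s = s' := e1.trans e2.symm
    subst e3
    have : g = g' := by
      funext i
      have := congrFun he i
      simpa using this
    rw [this]
  · rintro ⟨B, g⟩ hp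
    simp only [TT, Finset.mem_filter, Finset.mem_univ, true_and] at hp
    obtain ⟨t, ht, _⟩ := exists_unique_shift r n d hd B hp.1 g
    refine ⟨(t, B, fun i => g i - t), ?_, by simp⟩
    simp only [Finset.mem_product, QF, TT, Finset.mem_filter, Finset.mem_univ, true_and]
    refine ⟨⟨hp.1, fun i hi j hj hij => hp.2 hi hj ?_⟩, ht⟩
    simpa using hij

def injEquiv {n : ℕ} (B : Finset (Fin n)) (A : Type) :
    {g : Fin n → A // Set.InjOn g B} ≃ (B ↪ A) × ({i // i ∉ B} → A) where
  toFun g := (⟨fun i => g.1 i, fun i j h => Subtype.ext (g.2 i.2 j.2 h)⟩, fun i => g.1 i)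
  invFun e := ⟨fun i => if h : i ∈ B then e.1 ⟨i, h⟩ else e.2 ⟨i, h⟩, by
    intro i hi j hj h
    have hi' : i ∈ B := hi
    have hj' : j ∈ B := hj
    simp only [hi', hj', dif_pos] at h
    simpa using e.1.injective h⟩
  left_inv g := by
    ext i; simp; intro _; rfl
  right_inv e := by
    ext i
    · simp
    · have := i.2
      simp [this]

open Classical in
lemma card_inj {n m : ℕ} (B : Finset (Fin n)) :
    (Finset.univ.filter fun g : Fin n → ZMod (m+1) => Set.InjOn g B).card =
      (m+1).descFactorial B.card * (m+1)^(n - B.card) := by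
  rw [← Fintype.card_subtype, Fintype.card_congr (injEquiv B _), Fintype.card_prod,
    Fintype.card_embedding_eq, Fintype.card_fun, ZMod.card]
  congr 2
  · simp
  · rw [Fintype.card_subtype_compl]; simp

lemma card_TT (n m k : ℕ) : (TT n m k).card =
    n.choose k * ((m+1).descFactorial k * (m+1)^(n-k)) := by
  classical
  unfold TT
  rw [Finset.card_filter, Fintype.sum_prod_type]
  have : ∀ B : Finset (Fin n), (∑ g : Fin n → ZMod (m+1),
      if B.card = k ∧ Set.InjOn g B then 1 else 0) =
      if B.card = k then ((m+1).descFactorial k * (m+1)^(n-k)) else 0 := by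
    intro B
    by_cases h : B.card = k
    · simp only [h, true_and, if_true]
      rw [← Finset.card_filter]
      have := card_inj (m := m) B
      rw [h] at this
      convert this
    · simp [h]
  simp only at this ⊢
  rw [Finset.sum_congr rfl (fun B _ => this B), ← Finset.sum_filter, Finset.sum_const,
    smul_eq_mul]
  congr 1
  have : (Finset.univ.filter fun B : Finset (Fin n) => B.card = k) =
      Finset.powersetCard k Finset.univ := by
    ext B; simp [Finset.mem_powersetCard]
  rw [this, Finset.card_powersetCard]; simp

def toL {n m : ℕ} (p : Finset (Fin n) × (Fin n → ZMod (m+1))) : List (ℤ × Bool) :=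
  List.ofFn fun i => (((p.2 i).val : ℤ), decide (i ∈ p.1))

lemma toL_inj {n m : ℕ} : Function.Injective (toL (n := n) (m := m)) := by
  rintro ⟨B, g⟩ ⟨B', g'⟩ h
  have h1 := List.ofFn_injective h
  have h2 : ∀ i, g i = g' i ∧ (i ∈ B ↔ i ∈ B') := by
    intro i
    have := congrFun h1 i
    simp only [Prod.mk.injEq, decide_eq_decide, Nat.cast_inj] at this
    exact ⟨ZMod.val_injective _ this.1, this.2⟩
  ext i
  · exact (h2 i).2
  · simp [(h2 i).1]

lemma countP_ofFn' {A : Type*} {n : ℕ} (f : Fin n → A) (p : A → Bool) :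
    (List.ofFn f).countP p = (Finset.univ.filter fun i => p (f i) = true).card := by
  have : ∀ l : List A, l.countP p = (l.map (fun a => if p a = true then 1 else 0)).sum := by
    intro l
    induction l with
    | nil => simp
    | cons a t ih => rw [List.countP_cons, ih]; simp; ring
  rw [this, List.map_ofFn, List.sum_ofFn, Finset.card_filter]
  rfl

lemma SS_toL {n m : ℕ} (r : ℕ) (p : Finset (Fin n) × (Fin n → ZMod (m+1))) (x : ℕ) :
    SS r (toL p) x = ((∑ i, if (p.2 i).val < x then wB r p.1 i else 0 : ℕ) : ℤ) := by
  unfold SS toL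
  rw [List.map_ofFn, List.sum_ofFn]
  push_cast
  apply Finset.sum_congr rfl
  intro i _
  simp only [Function.comp, Nat.cast_lt]
  split_ifs
  · by_cases h : i ∈ p.1 <;> simp [wB, wt, h]
  · rfl

lemma toL_mem (r n d : ℕ) (p : Finset (Fin n) × (Fin n → ZMod ((r*d+(n-d))+1))) :
    toL p ∈ QQ r n d ↔ p ∈ QF r n (r*d+(n-d)) (n-d) := by
  simp only [QF, TT, Finset.mem_filter, Finset.mem_univ, true_and, QQ, Set.mem_ofPred_eq]
  have e1 : (toL p).length = n := by simp [toL]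
  have e2 : (toL p).countP (fun p => p.2) = p.1.card := by
    unfold toL
    rw [countP_ofFn']; simp
  have e3 : (∀ y, (toL p).count (y, true) ≤ 1) ↔ Set.InjOn p.2 p.1 := by
    have hc : ∀ y, (toL p).count (y, true) =
        (Finset.univ.filter fun i => ((p.2 i).val : ℤ) = y ∧ i ∈ p.1).card := by
      intro y
      rw [List.count]
      unfold toL
      rw [countP_ofFn']; simp
    simp only [hc, Finset.card_le_one]
    constructor
    · intro h i hi j hj hij
      exact h ((p.2 i).val) i (by simpa using hi) j (by simpa [hij] using hj)
    · intro h y i hi j hj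
      simp only [Finset.mem_filter, Finset.mem_univ, true_and] at hi hj
      apply h hi.2 hj.2
      apply ZMod.val_injective
      have := hi.1.trans hj.1.symm
      exact_mod_cast this
  have e4 : ∀ q ∈ toL p, 0 ≤ q.1 := by
    intro q hq
    simp only [toL, List.mem_ofFn] at hq
    obtain ⟨i, rfl⟩ := hq
    exact Int.natCast_nonneg _
  rw [e2, e3]
  constructor
  · rintro ⟨_, h2, h3, _, h5⟩
    refine ⟨⟨h2, h3⟩, fun x hx => ?_⟩
    have := h5 x (by positivity) (by exact_mod_cast hx)
    rw [SS_toL] at this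
    exact_mod_cast this
  · rintro ⟨⟨h2, h3⟩, h5⟩
    refine ⟨e1, h2, h3, e4, fun x hx0 hx => ?_⟩
    lift x to ℕ using hx0
    rw [SS_toL]
    have := h5 x (by exact_mod_cast hx)
    exact_mod_cast this

lemma QQ_ncard (r n d : ℕ) (hr : 1 ≤ r) (hd : d ≤ n) :
    (QQ r n d).ncard = (QF r n (r*d+(n-d)) (n-d)).card := by
  rw [← Set.ncard_coe_finset, ← Set.ncard_image_of_injective _ (toL_inj)]
  congr 1
  ext l
  constructor
  · intro hl
    have hlt := QQ_lt hr hd hl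
    have hlen : l.length = n := hl.1
    have h0 := hl.2.2.2.1
    let p : Finset (Fin n) × (Fin n → ZMod ((r*d+(n-d))+1)) :=
      (Finset.univ.filter fun i => (l[i.val]'(by omega)).2 = true,
        fun i => (((l[i.val]'(by omega)).1.toNat : ℕ) : ZMod _))
    have hp : toL p = l := by
      apply List.ext_getElem
      · simp [toL, hlen]
      · intro i h1 h2
        simp only [toL, List.getElem_ofFn, p]
        have a1 := hlt _ (List.getElem_mem h2)
        have a2 := h0 _ (List.getElem_mem h2)
        have a3 : l[i].1.toNat < r*d+(n-d)+1 := by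
          zify
          rw [Int.toNat_of_nonneg a2]
          omega
        ext
        · simp only
          rw [ZMod.val_natCast_of_lt a3, Int.toNat_of_nonneg a2]
        · simp
    refine ⟨p, ?_, hp⟩
    have := (toL_mem r n d p).mp (by rw [hp]; exact hl)
    exact_mod_cast this
  · rintro ⟨p, hp, rfl⟩
    exact (toL_mem r n d p).mpr (by exact_mod_cast hp)

/-- For `n ≥ 1`, `r ≥ 1`, `0 ≤ d ≤ n`:
`d! * (d*(r-1)+n+1) * |P_{n,d}^r| = n! * C(d*(r-1)+n+1, n-d) * (d*(r-1)+n+1)^d`,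
i.e. `|P_{n,d}^r| = (n!/d!) * C(d*(r-1)+n+1, n-d) * (d*(r-1)+n+1)^(d-1)`. -/
theorem parking_count (r n d : ℕ) (hr : 1 ≤ r) (hn : 1 ≤ n) (hd : d ≤ n) :
    Nat.factorial d * (d * (r - 1) + n + 1) * (Pk r n d).ncard
      = Nat.factorial n * Nat.choose (d * (r - 1) + n + 1) (n - d)
          * (d * (r - 1) + n + 1) ^ d := by
  rw [Pk_ncard r n d hr, QP_eq_QQ r n d hr hd, QQ_ncard r n d hr hd]
  have hN : d * (r - 1) + n + 1 = r * d + (n - d) + 1 := by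
    obtain ⟨r, rfl⟩ := Nat.exists_eq_add_of_le hr
    obtain ⟨k, rfl⟩ := Nat.exists_eq_add_of_le hd
    simp only [Nat.add_sub_cancel_left]
    ring
  rw [hN, mul_assoc, card_QF r n d hd, card_TT, Nat.descFactorial_eq_factorial_mul_choose,
    Nat.sub_sub_self hd]
  have := Nat.choose_mul_factorial_mul_factorial (Nat.sub_le n d)
  rw [Nat.sub_sub_self hd] at this
  rw [← this]
  ring
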